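/- For an odd integer m ≥ 3, define g_m(y) = (−1)^{(m+1)/2} · ∫_0^y cos(mt)/(2·cos(t)) dt. Then for every odd integer m ≥ 43 and every y ∈ [0, 11/9], one has g_m(y) ≤ 0.06. -/

import Mathlib

open Real intervalIntegral

noncomputable def gOsc (m : ℕ) (y : ℝ) : ℝ :=
  (-1 : ℝ) ^ ((m + 1) / 2) * ∫ t in (0:ℝ)..y, Real.cos (m * t) / (2 * Real.cos t)

/-!
Integrate `cos (r * t) / cos t` by parts, taking the primitive `sin (r * t) / r` of the oscillating
factor. This primitive vanishes at `0` and is at most `1 / |r|` in absolute value, and `1 / cos` is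
increasing on `[0, π / 2)`. So the boundary term at `y` costs `1 / (|r| * cos y)`, and the remaining
integral costs the total variation `1 / cos y - 1` divided by `|r|`. Since `cos (11 / 9) > 1 / 3`,
the integral halved is at most `5 / (2 * |r|) ≤ 5 / 86 < 0.06`.
-/

open MeasureTheory (volume)
open Set

theorem norm_integral_smul_deriv_sub_le {E : Type*} [NormedAddCommGroup E] [NormedSpace ℝ E]
    [CompleteSpace E] {u u' : ℝ → ℝ} {v v' : ℝ → E} {a b M : ℝ} (hab : a ≤ b)
    (hu : ContinuousOn u (Icc a b)) (hv : ContinuousOn v (Icc a b))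
    (huu' : ∀ t ∈ Ioo a b, HasDerivAt u (u' t) t) (hvv' : ∀ t ∈ Ioo a b, HasDerivAt v (v' t) t)
    (hu'_nonneg : ∀ t ∈ Ioo a b, 0 ≤ u' t) (hv' : IntervalIntegrable v' volume a b)
    (hvM : ∀ t ∈ Ioo a b, ‖v t‖ ≤ M) :
    ‖(∫ t in a..b, u t • v' t) - (u b • v b - u a • v a)‖ ≤ (u b - u a) * M := by
  have hu' : IntervalIntegrable u' volume a b := by
    refine intervalIntegrable_deriv_of_nonneg (g := u) ?_ ?_ ?_ <;>
      simpa only [uIcc_of_le hab, min_eq_left hab, max_eq_right hab]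
  have by_parts : ∫ t in a..b, u t • v' t = u b • v b - u a • v a - ∫ t in a..b, u' t • v t := by
    refine integral_smul_deriv_eq_deriv_smul_of_hasDerivAt ?_ ?_ ?_ ?_ hu' hv' <;>
      simpa only [uIcc_of_le hab, min_eq_left hab, max_eq_right hab]
  have norm_le : ∀ᵐ t, t ∈ Ioc a b → ‖u' t • v t‖ ≤ u' t * M := by
    filter_upwards [MeasureTheory.Measure.ae_ne volume b] with t htb ht
    have ht' : t ∈ Ioo a b := ⟨ht.1, ht.2.lt_of_ne htb⟩
    rw [norm_smul, Real.norm_of_nonneg (hu'_nonneg t ht')]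
    exact mul_le_mul_of_nonneg_left (hvM t ht') (hu'_nonneg t ht')
  calc ‖(∫ t in a..b, u t • v' t) - (u b • v b - u a • v a)‖
      = ‖∫ t in a..b, u' t • v t‖ := by rw [by_parts, sub_sub_cancel_left, norm_neg]
    _ ≤ ∫ t in a..b, u' t * M := norm_integral_le_of_norm_le hab norm_le (hu'.mul_const M)
    _ = (u b - u a) * M := by
      rw [integral_mul_const, integral_eq_sub_of_hasDerivAt_of_le hab hu huu' hu']

theorem hasDerivAt_sin_mul_div {r : ℝ} (hr : r ≠ 0) (t : ℝ) :
    HasDerivAt (fun s ↦ sin (r * s) / r) (cos (r * t)) t := by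
  simpa [hr] using ((hasDerivAt_id t).const_mul r).sin.div_const r

theorem abs_sin_div_le (x r : ℝ) : |sin x / r| ≤ 1 / |r| := by
  rw [abs_div]
  gcongr
  exact abs_sin_le_one x

theorem abs_integral_mul_cos_le {u u' : ℝ → ℝ} {b r : ℝ} (hb : 0 ≤ b) (hr : r ≠ 0)
    (hu : ContinuousOn u (Icc 0 b)) (huu' : ∀ t ∈ Ioo 0 b, HasDerivAt u (u' t) t)
    (hu'_nonneg : ∀ t ∈ Ioo 0 b, 0 ≤ u' t) :
    |∫ t in (0 : ℝ)..b, u t * cos (r * t)| ≤ (|u b| + (u b - u 0)) / |r| := by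
  set I := ∫ t in (0 : ℝ)..b, u t * cos (r * t)
  have boundary : |u b * (sin (r * b) / r)| ≤ |u b| * (1 / |r|) := by
    rw [abs_mul]
    gcongr
    exact abs_sin_div_le _ r
  have remainder : |I - u b * (sin (r * b) / r)| ≤ (u b - u 0) * (1 / |r|) := by
    simpa using norm_integral_smul_deriv_sub_le hb hu
      (fun t _ ↦ (hasDerivAt_sin_mul_div hr t).continuousAt.continuousWithinAt) huu'
      (fun t _ ↦ hasDerivAt_sin_mul_div hr t) hu'_nonneg
      (Continuous.intervalIntegrable (by fun_prop) _ _) (fun t _ ↦ abs_sin_div_le (r * t) r)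
  calc |I| = |u b * (sin (r * b) / r) + (I - u b * (sin (r * b) / r))| := by
        rw [add_sub_cancel]
    _ ≤ |u b| * (1 / |r|) + (u b - u 0) * (1 / |r|) :=
      (abs_add_le _ _).trans (add_le_add boundary remainder)
    _ = (|u b| + (u b - u 0)) / |r| := by ring

theorem hasDerivAt_inv_cos {t : ℝ} (ht : cos t ≠ 0) :
    HasDerivAt (fun s ↦ (cos s)⁻¹) (sin t / cos t ^ 2) t := by
  simpa using (hasDerivAt_cos t).fun_inv ht

theorem abs_integral_cos_mul_div_cos_le {r y : ℝ} (hr : r ≠ 0) (hy : y ∈ Ico 0 (π / 2)) :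
    |∫ t in (0 : ℝ)..y, cos (r * t) / cos t| ≤ (2 / cos y - 1) / |r| := by
  have cos_pos : ∀ t ∈ Icc 0 y, 0 < cos t := fun t ht ↦
    cos_pos_of_mem_Ioo ⟨by linarith [ht.1, pi_pos], ht.2.trans_lt hy.2⟩
  have bound := abs_integral_mul_cos_le (u := fun t ↦ (cos t)⁻¹) hy.1 hr
    (fun t ht ↦ (hasDerivAt_inv_cos (cos_pos t ht).ne').continuousAt.continuousWithinAt)
    (fun t ht ↦ hasDerivAt_inv_cos (cos_pos t (Ioo_subset_Icc_self ht)).ne')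
    (fun t ht ↦ div_nonneg
      (sin_nonneg_of_nonneg_of_le_pi ht.1.le (by linarith [ht.2, hy.2, pi_pos])) (sq_nonneg _))
  rw [abs_of_pos (inv_pos.mpr (cos_pos y ⟨hy.1, le_rfl⟩)), cos_zero, inv_one] at bound
  convert! bound using 2
  · simp only [div_eq_inv_mul]
  · ring

theorem one_third_lt_cos_eleven_ninths : 1 / 3 < cos (11 / 9) := by
  have gap : 0.34 ≤ π / 2 - 11 / 9 := by linarith [pi_gt_d2]
  calc (1 / 3 : ℝ) < 0.34 - 0.34 ^ 3 / 6 := by norm_num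
    _ < sin 0.34 := sin_gt_sub_cube (by norm_num)
    _ ≤ sin (π / 2 - 11 / 9) :=
      sin_le_sin_of_le_of_le_pi_div_two (by linarith [pi_pos]) (by linarith) gap
    _ = cos (11 / 9) := sin_pi_div_two_sub _

theorem gm_bound_small_general {r y : ℝ} (hr : 43 ≤ |r|) (hy : y ∈ Icc 0 (11 / 9)) :
    |∫ t in (0 : ℝ)..y, cos (r * t) / (2 * cos t)| ≤ 0.06 := by
  have hr0 : r ≠ 0 := abs_pos.mp (by linarith)
  have cos_y : 1 / 3 ≤ cos y := one_third_lt_cos_eleven_ninths.le.trans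
    (cos_le_cos_of_nonneg_of_le_pi hy.1 (by linarith [pi_gt_three]) hy.2)
  calc |∫ t in (0 : ℝ)..y, cos (r * t) / (2 * cos t)|
      = |∫ t in (0 : ℝ)..y, cos (r * t) / cos t| / 2 := by
        simp only [mul_comm (2 : ℝ), ← div_div, integral_div, abs_div, abs_two]
    _ ≤ (2 / cos y - 1) / |r| / 2 := by
      gcongr
      exact abs_integral_cos_mul_div_cos_le hr0 ⟨hy.1, by linarith [hy.2, pi_gt_three]⟩
    _ ≤ (2 / (1 / 3) - 1) / 43 / 2 := by gcongr
    _ ≤ 0.06 := by norm_num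

theorem gm_bound_small (m : ℕ) (hm : Odd m) (hm43 : 43 ≤ m)
    (y : ℝ) (hy : y ∈ Set.Icc 0 ((11:ℝ) / 9)) :
    gOsc m y ≤ 0.06 := by
  calc gOsc m y ≤ |gOsc m y| := le_abs_self _
    _ = |∫ t in (0 : ℝ)..y, cos (m * t) / (2 * cos t)| := by simp [gOsc, abs_mul]
    _ ≤ 0.06 := gm_bound_small_general (by simpa using hm43) hy
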